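/- Let N ≥ 1 be an integer, let j ∈ {1, 2}, and let γ*, β, G, A, B be real numbers with 0 ≤ γ* < 1/N², 0 ≤ β < 1/N², G ≥ 0, A ≥ 0, B ≥ 0. Let (u_m)_{m≥1} and (v_m)_{m≥1} be sequences of reals with 0 ≤ u_m ≤ β and 0 ≤ v_m ≤ γ* for all m. Then for every integer k ≥ 1, N^{jk}·(∏_{m=1}^k u_m)·G + A·∑_{m=1}^k N^{j(k−m+1)}·u_m·(∏_{n=m+1}^k v_n) + B·∑_{m=1}^{k−1} N^{j(k−m+1)}·(∏_{n=m+1}^k u_n) ≤ N^j β·( G + A/(1 − N^j γ*) + N^j B/(1 − N^j β) ). -/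

import Mathlib

/-!
Write `M = N ^ j`. Matching each factor of a product with one power of `M` turns the products of
the `u n` and of the `v n` into powers of the ratios `M * β` and `M * γ`, both less than `1`. The
two sums are thus dominated by geometric series; every term keeps at least one factor `M * β`,
and in the last sum there is one power of `M` more than there are factors `u n`.
-/

open Finset

section OrderedSemiring

variable {R ι : Type*} [CommSemiring R] [PartialOrder R] [IsOrderedRing R]

lemma pow_card_mul_prod_le_pow_card {s : Finset ι} {w : ι → R} {M b : R} (hM : 0 ≤ M)
    (hw : ∀ i ∈ s, w i ∈ Set.Icc 0 b) :
    M ^ #s * ∏ i ∈ s, w i ≤ (M * b) ^ #s := by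
  calc M ^ #s * ∏ i ∈ s, w i = ∏ i ∈ s, M * w i := by rw [prod_mul_distrib, prod_const]
    _ ≤ ∏ _i ∈ s, M * b :=
      prod_le_prod (fun i hi => mul_nonneg hM (hw i hi).1)
        fun i hi => mul_le_mul_of_nonneg_left (hw i hi).2 hM
    _ = (M * b) ^ #s := prod_const _

lemma pow_sub_mul_prod_Icc_le_pow_sub {w : ℕ → R} {M b : R} {m k : ℕ} (hM : 0 ≤ M)
    (hw : ∀ n ∈ Icc (m + 1) k, w n ∈ Set.Icc 0 b) :
    M ^ (k - m) * ∏ n ∈ Icc (m + 1) k, w n ≤ (M * b) ^ (k - m) := by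
  simpa using pow_card_mul_prod_le_pow_card hM hw

end OrderedSemiring

section OrderedField

variable {K : Type*} [Field K] [LinearOrder K] [IsStrictOrderedRing K]

lemma pow_mul_lt_one_of_lt_one_div_pow {a x : K} {j d : ℕ} (ha : 1 ≤ a) (hjd : j ≤ d)
    (hx₀ : 0 ≤ x) (hx : x < 1 / a ^ d) : a ^ j * x < 1 := by
  have had : 0 < a ^ d := pow_pos (one_pos.trans_le ha) d
  calc a ^ j * x ≤ a ^ d * x := mul_le_mul_of_nonneg_right (pow_le_pow_right₀ ha hjd) hx₀
    _ < 1 := (lt_div_iff₀' had).mp hx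

lemma sum_Icc_pow_sub_le_div_one_sub {x : K} (hx₀ : 0 ≤ x) (hx₁ : x < 1) (a : ℕ) {n k : ℕ}
    (hnk : n ≤ k) : ∑ m ∈ Icc a n, x ^ (k - m) ≤ x ^ (k - n) / (1 - x) := by
  calc ∑ m ∈ Icc a n, x ^ (k - m) = ∑ i ∈ Ico (k - n) (k + 1 - a), x ^ i := by
        rw [← Ico_add_one_right_eq_Icc, sum_Ico_reflect _ _ (by lia), Nat.add_sub_add_right]
    _ ≤ x ^ (k - n) / (1 - x) := geom_sum_Ico_le_of_lt_one hx₀ hx₁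

lemma sum_pow_sub_mul_prod_Icc_le_div_one_sub {w : ℕ → K} {M b : K} {a n k : ℕ} (hM : 0 ≤ M)
    (hb : 0 ≤ b) (hMb : M * b < 1) (hnk : n ≤ k)
    (hw : ∀ i ∈ Icc (a + 1) k, w i ∈ Set.Icc 0 b) :
    ∑ m ∈ Icc a n, M ^ (k - m) * ∏ i ∈ Icc (m + 1) k, w i ≤
      (M * b) ^ (k - n) / (1 - M * b) := by
  refine le_trans (sum_le_sum fun m hm => ?_)
    (sum_Icc_pow_sub_le_div_one_sub (mul_nonneg hM hb) hMb a hnk)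
  have ham : a + 1 ≤ m + 1 := Nat.succ_le_succ (mem_Icc.mp hm).1
  exact pow_sub_mul_prod_Icc_le_pow_sub hM fun i hi => hw i (Icc_subset_Icc_left ham hi)

lemma sum_pow_succ_mul_mul_prod_Icc_le {u v : ℕ → K} {M β γ : K} {a k : ℕ} (hM : 0 ≤ M)
    (hβ : 0 ≤ β) (hγ : 0 ≤ γ) (hMγ : M * γ < 1) (hu : ∀ m ∈ Icc a k, u m ≤ β)
    (hv : ∀ m ∈ Icc (a + 1) k, v m ∈ Set.Icc 0 γ) :
    ∑ m ∈ Icc a k, M ^ (k - m + 1) * (u m * ∏ n ∈ Icc (m + 1) k, v n) ≤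
      M * β / (1 - M * γ) := by
  have hterm : ∀ m ∈ Icc a k, M ^ (k - m + 1) * (u m * ∏ n ∈ Icc (m + 1) k, v n) ≤
      M * β * (M ^ (k - m) * ∏ n ∈ Icc (m + 1) k, v n) := by
    intro m hm
    have ham : a + 1 ≤ m + 1 := Nat.succ_le_succ (mem_Icc.mp hm).1
    have hprod : 0 ≤ ∏ n ∈ Icc (m + 1) k, v n :=
      prod_nonneg fun n hn => (hv n (Icc_subset_Icc_left ham hn)).1
    calc M ^ (k - m + 1) * (u m * ∏ n ∈ Icc (m + 1) k, v n)
        ≤ M ^ (k - m + 1) * (β * ∏ n ∈ Icc (m + 1) k, v n) := by gcongr; exact hu m hm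
      _ = M * β * (M ^ (k - m) * ∏ n ∈ Icc (m + 1) k, v n) := by ring
  calc ∑ m ∈ Icc a k, M ^ (k - m + 1) * (u m * ∏ n ∈ Icc (m + 1) k, v n)
      ≤ M * β * ∑ m ∈ Icc a k, M ^ (k - m) * ∏ n ∈ Icc (m + 1) k, v n := by
        rw [mul_sum]; exact sum_le_sum hterm
    _ ≤ M * β * ((M * γ) ^ (k - k) / (1 - M * γ)) := by
        gcongr; exact sum_pow_sub_mul_prod_Icc_le_div_one_sub hM hγ hMγ le_rfl hv
    _ = M * β / (1 - M * γ) := by rw [Nat.sub_self, pow_zero, mul_one_div]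

lemma sum_pow_succ_mul_prod_Icc_le {u : ℕ → K} {M β : K} {a n k : ℕ} (hM : 0 ≤ M)
    (hβ : 0 ≤ β) (hMβ : M * β < 1) (hnk : n ≤ k)
    (hu : ∀ i ∈ Icc (a + 1) k, u i ∈ Set.Icc 0 β) :
    ∑ m ∈ Icc a n, M ^ (k - m + 1) * ∏ i ∈ Icc (m + 1) k, u i ≤
      M * ((M * β) ^ (k - n) / (1 - M * β)) := by
  simp only [pow_succ', mul_assoc M, ← mul_sum]
  gcongr
  simpa only [mul_assoc] using sum_pow_sub_mul_prod_Icc_le_div_one_sub hM hβ hMβ hnk hu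

theorem stmt_8_general {M γ β G A B : K} {u v : ℕ → K} {k : ℕ} (hM : 0 ≤ M)
    (hMγ : M * γ < 1) (hMβ : M * β < 1) (hG : 0 ≤ G) (hA : 0 ≤ A) (hB : 0 ≤ B)
    (hu : ∀ m ∈ Icc 1 k, u m ∈ Set.Icc 0 β) (hv : ∀ m ∈ Icc 1 k, v m ∈ Set.Icc 0 γ)
    (hk : 1 ≤ k) :
    M ^ k * (∏ m ∈ Icc 1 k, u m) * G +
      A * ∑ m ∈ Icc 1 k, M ^ (k - m + 1) * (u m * ∏ n ∈ Icc (m + 1) k, v n) +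
      B * ∑ m ∈ Icc 1 (k - 1), M ^ (k - m + 1) * ∏ n ∈ Icc (m + 1) k, u n ≤
    M * β * (G + A / (1 - M * γ) + M * B / (1 - M * β)) := by
  have hk_mem : 1 ∈ Icc 1 k := left_mem_Icc.mpr hk
  have hβ : 0 ≤ β := (hu 1 hk_mem).1.trans (hu 1 hk_mem).2
  have hγ : 0 ≤ γ := (hv 1 hk_mem).1.trans (hv 1 hk_mem).2
  have htail : Icc (1 + 1) k ⊆ Icc 1 k := Icc_subset_Icc_left one_le_two
  have hprod : M ^ k * ∏ m ∈ Icc 1 k, u m ≤ M * β :=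
    (pow_sub_mul_prod_Icc_le_pow_sub (m := 0) hM hu).trans
      (pow_le_of_le_one (mul_nonneg hM hβ) hMβ.le (Nat.ne_of_gt hk))
  have hsum_uv := sum_pow_succ_mul_mul_prod_Icc_le hM hβ hγ hMγ (fun m hm => (hu m hm).2)
    fun m hm => hv m (htail hm)
  have hsum_u := sum_pow_succ_mul_prod_Icc_le hM hβ hMβ (Nat.sub_le k 1)
    fun m hm => hu m (htail hm)
  rw [Nat.sub_sub_self hk, pow_one] at hsum_u
  calc _ ≤ M * β * G + A * (M * β / (1 - M * γ)) + B * (M * (M * β / (1 - M * β))) := by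
        gcongr
    _ = M * β * (G + A / (1 - M * γ) + M * B / (1 - M * β)) := by ring

end OrderedField

/-- The key estimate in the proof of the bound on `‖T_j(σ,g) − T_j(ς,g)‖`
for the Read–Bajraktarevic operators associated with the derivatives
(`j = 1, 2`) of a Cubic Spline SFIF on `N` subintervals: if
`0 ≤ u_m ≤ β < 1/N²` and `0 ≤ v_m ≤ γ* < 1/N²`, then for every `k ≥ 1`,
`N^{jk}(∏ u_m)G + A ∑ N^{j(k−m+1)} u_m (∏ v_n) + B ∑ N^{j(k−m+1)} (∏ u_n)
  ≤ N^j β (G + A/(1−N^jγ*) + N^jB/(1−N^jβ))`. -/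
theorem stmt_8 (N : ℕ) (hN : 1 ≤ N) (j : ℕ) (hj : j = 1 ∨ j = 2)
    (γs β G A B : ℝ) (hγ0 : 0 ≤ γs) (hγ1 : γs < 1 / (N : ℝ) ^ 2)
    (hβ0 : 0 ≤ β) (hβ1 : β < 1 / (N : ℝ) ^ 2)
    (hG : 0 ≤ G) (hA : 0 ≤ A) (hB : 0 ≤ B)
    (u v : ℕ → ℝ) (hu : ∀ m, 0 ≤ u m ∧ u m ≤ β) (hv : ∀ m, 0 ≤ v m ∧ v m ≤ γs)
    (k : ℕ) (hk : 1 ≤ k) :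
    (N : ℝ) ^ (j * k) * (∏ m ∈ Finset.Icc 1 k, u m) * G +
      A * ∑ m ∈ Finset.Icc 1 k,
        (N : ℝ) ^ (j * (k - m + 1)) * (u m * ∏ n ∈ Finset.Icc (m + 1) k, v n) +
      B * ∑ m ∈ Finset.Icc 1 (k - 1),
        (N : ℝ) ^ (j * (k - m + 1)) * ∏ n ∈ Finset.Icc (m + 1) k, u n ≤
    (N : ℝ) ^ j * β *
      (G + A / (1 - (N : ℝ) ^ j * γs) +
        (N : ℝ) ^ j * B / (1 - (N : ℝ) ^ j * β)) := by
  have hN₁ : (1 : ℝ) ≤ N := Nat.one_le_cast.mpr hN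
  have hj₂ : j ≤ 2 := by lia
  simp only [pow_mul]
  exact stmt_8_general (by positivity) (pow_mul_lt_one_of_lt_one_div_pow hN₁ hj₂ hγ0 hγ1)
    (pow_mul_lt_one_of_lt_one_div_pow hN₁ hj₂ hβ0 hβ1) hG hA hB (fun m _ => hu m)
    (fun m _ => hv m) hk
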